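/- Let n ≥ 1 and let f ∈ L¹(ℝⁿ). Define the total variation Var(f) = sup { ∫_{ℝⁿ} f(x) div ζ(x) dx : ζ : ℝⁿ → ℝⁿ continuously differentiable with compact support and sup_{x} ‖ζ(x)‖ ≤ 1 }. Then Var(f) ≤ (√π / 2) · liminf_{t → 0⁺} t^{-1/2} ∫_{ℝⁿ} ∫_{ℝⁿ} p_t(x,y) |f(y) − f(x)| dy dx, the liminf being taken in [0,∞]. -/

import Mathlib

open Real MeasureTheory Filter Topology

/-!
For a `C¹` function `g`, integration by parts bounds the total variation by `∫ ‖∇g‖`. If `Z` is a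
standard Gaussian vector, then `𝔼 |L Z| = √(2 / π) ‖L‖` for every linear form `L`, so `∫ ‖∇g‖` is
`√(π / 2) ∫ 𝔼 |∇g(x) · Z| dx`. Here `∇g(x) · Z` is the limit of the difference quotients of `g`
along `√(2t) Z` as `t → 0⁺`, and the law of `√(2t) Z` has density `p_t`; Fatou's lemma then gives
the bound for `g`.

A general `f` is mollified. Averaging the translates of `f` does not increase the `L¹` distance
between the function and any of its translates, hence it does not increase the right-hand side,
while the total variation is lower semicontinuous along the mollification.
-/

open ContinuousLinearMap (lsmul mul)

open scoped ENNReal NNReal InnerProductSpace Convolution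

section Divergence

variable {E : Type*} [NormedAddCommGroup E] [InnerProductSpace ℝ E] {ζ : E → E}

/-- The divergence of a vector field, as the basis-free trace of its derivative. -/
noncomputable def divergence (ζ : E → E) (x : E) : ℝ :=
  LinearMap.trace ℝ E (fderiv ℝ ζ x)

lemma divergence_eq_sum_fderiv_inner {ι : Type*} [Fintype ι] (b : OrthonormalBasis ι ℝ E) {x : E}
    (hζ : DifferentiableAt ℝ ζ x) :
    divergence ζ x = ∑ i, fderiv ℝ (fun y => ⟪b i, ζ y⟫_ℝ) x (b i) := by
  rw [divergence, LinearMap.trace_eq_sum_inner _ b]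
  refine Finset.sum_congr rfl fun i _ => ?_
  rw [fderiv_inner_apply ℝ (differentiableAt_const _) hζ]
  simp

lemma divergence_euclideanSpace {n : ℕ} {ζ : EuclideanSpace ℝ (Fin n) → EuclideanSpace ℝ (Fin n)}
    {x : EuclideanSpace ℝ (Fin n)} (hζ : DifferentiableAt ℝ ζ x) :
    divergence ζ x = ∑ i, fderiv ℝ (fun y => ζ y i) x (EuclideanSpace.single i 1) := by
  simp [divergence_eq_sum_fderiv_inner (EuclideanSpace.basisFun (Fin n) ℝ) hζ,
    EuclideanSpace.inner_single_left]

lemma hasCompactSupport_divergence (hζ : HasCompactSupport ζ) :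
    HasCompactSupport (divergence ζ) :=
  (hζ.fderiv ℝ).comp_left (g := fun T : E →L[ℝ] E => LinearMap.trace ℝ E T) (by simp)

lemma continuous_divergence [FiniteDimensional ℝ E] (hζ : ContDiff ℝ 1 ζ) :
    Continuous (divergence ζ) :=
  (LinearMap.trace ℝ E ∘ₗ ContinuousLinearMap.coeLM ℝ).continuous_of_finiteDimensional.comp
    (hζ.continuous_fderiv one_ne_zero)

end Divergence

section IntegrationByParts

variable {E : Type*} [NormedAddCommGroup E] [MeasurableSpace E] [BorelSpace E]

lemma integral_mul_fderiv_eq_neg_of_hasCompactSupport [NormedSpace ℝ E] [FiniteDimensional ℝ E]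
    {μ : Measure E} [μ.IsAddHaarMeasure] {g h : E → ℝ} (hg : ContDiff ℝ 1 g)
    (hh : ContDiff ℝ 1 h) (hsupp : HasCompactSupport h) (v : E) :
    ∫ x, g x * fderiv ℝ h x v ∂μ = -∫ x, fderiv ℝ g x v * h x ∂μ := by
  have continuous_partial {k : E → ℝ} (hk : ContDiff ℝ 1 k) :
      Continuous fun x => fderiv ℝ k x v :=
    (hk.continuous_fderiv one_ne_zero).clm_apply continuous_const
  refine integral_mul_fderiv_eq_neg_fderiv_mul_of_integrable ?_ ?_ ?_
    (fun x _ => hg.differentiable one_ne_zero x) (fun x _ => hh.differentiable one_ne_zero x)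
  · exact ((continuous_partial hg).mul hh.continuous).integrable_of_hasCompactSupport
      hsupp.mul_left
  · exact (hg.continuous.mul (continuous_partial hh)).integrable_of_hasCompactSupport
      (hsupp.fderiv_apply ℝ v).mul_left
  · exact (hg.continuous.mul hh.continuous).integrable_of_hasCompactSupport hsupp.mul_left

variable [InnerProductSpace ℝ E] [FiniteDimensional ℝ E]

lemma integral_mul_divergence {μ : Measure E} [μ.IsAddHaarMeasure] {g : E → ℝ} {ζ : E → E}
    (hg : ContDiff ℝ 1 g) (hζ : ContDiff ℝ 1 ζ) (hsupp : HasCompactSupport ζ) :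
    ∫ x, g x * divergence ζ x ∂μ = -∫ x, fderiv ℝ g x (ζ x) ∂μ := by
  set b := stdOrthonormalBasis ℝ E
  have component_contDiff (i) : ContDiff ℝ 1 fun x => ⟪b i, ζ x⟫_ℝ := contDiff_const.inner ℝ hζ
  have component_supp (i) : HasCompactSupport fun x => ⟪b i, ζ x⟫_ℝ :=
    hsupp.comp_left (g := fun v => ⟪b i, v⟫_ℝ) (inner_zero_right _)
  have integrable_left (i) :
      Integrable (fun x => g x * fderiv ℝ (fun y => ⟪b i, ζ y⟫_ℝ) x (b i)) μ :=
    (hg.continuous.mul (((component_contDiff i).continuous_fderiv one_ne_zero).clm_apply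
      continuous_const)).integrable_of_hasCompactSupport
      ((component_supp i).fderiv_apply ℝ (b i)).mul_left
  have integrable_right (i) : Integrable (fun x => fderiv ℝ g x (b i) * ⟪b i, ζ x⟫_ℝ) μ :=
    (((hg.continuous_fderiv one_ne_zero).clm_apply continuous_const).mul
      (component_contDiff i).continuous).integrable_of_hasCompactSupport (component_supp i).mul_left
  have expand (x) : fderiv ℝ g x (ζ x) = ∑ i, fderiv ℝ g x (b i) * ⟪b i, ζ x⟫_ℝ := by
    conv_lhs => rw [← b.sum_repr' (ζ x), map_sum]
    simp only [map_smul, smul_eq_mul, mul_comm]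
  simp_rw [divergence_eq_sum_fderiv_inner b (hζ.differentiable one_ne_zero _), Finset.mul_sum,
    expand]
  rw [integral_finsetSum _ fun i _ => integrable_left i,
    integral_finsetSum _ fun i _ => integrable_right i, ← Finset.sum_neg_distrib]
  exact Finset.sum_congr rfl fun i _ =>
    integral_mul_fderiv_eq_neg_of_hasCompactSupport hg (component_contDiff i) (component_supp i) _

/-- The total variation of a function, by duality with compactly supported `C¹` vector fields of
norm at most one. -/
noncomputable def totalVariation (f : E → ℝ) : ℝ≥0∞ :=
  ⨆ ζ : {ζ : E → E // ContDiff ℝ 1 ζ ∧ HasCompactSupport ζ ∧ ∀ x, ‖ζ x‖ ≤ 1},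
    ENNReal.ofReal (∫ x, f x * divergence ζ.1 x)

lemma totalVariation_le_lintegral_enorm_fderiv {g : E → ℝ} (hg : ContDiff ℝ 1 g) :
    totalVariation g ≤ ∫⁻ x, ‖fderiv ℝ g x‖ₑ := by
  refine iSup_le fun ⟨ζ, hζ, hsupp, hbound⟩ => ?_
  have enorm_le_one (x) : ‖ζ x‖ₑ ≤ 1 := by
    simpa only [ofReal_norm, ENNReal.ofReal_one] using ENNReal.ofReal_le_ofReal (hbound x)
  calc ENNReal.ofReal (∫ x, g x * divergence ζ x)
      ≤ ‖∫ x, g x * divergence ζ x‖ₑ := ofReal_le_enorm _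
    _ = ‖∫ x, fderiv ℝ g x (ζ x)‖ₑ := by rw [integral_mul_divergence hg hζ hsupp, enorm_neg]
    _ ≤ ∫⁻ x, ‖fderiv ℝ g x (ζ x)‖ₑ := enorm_integral_le_lintegral_enorm _
    _ ≤ ∫⁻ x, ‖fderiv ℝ g x‖ₑ := lintegral_mono fun x =>
        ((fderiv ℝ g x).le_opENorm (ζ x)).trans (mul_le_of_le_one_right' (enorm_le_one x))

end IntegrationByParts

section HeatKernel

variable {E : Type*} [NormedAddCommGroup E] [InnerProductSpace ℝ E]

/-- The Gauss–Weierstrass kernel at time `t` as a function of the displacement, so that `p_t(x, y)`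
is `heatKernel t (x - y)`. -/
noncomputable def heatKernel (t : ℝ) (z : E) : ℝ :=
  (4 * π * t) ^ (-(Module.finrank ℝ E : ℝ) / 2) * exp (-‖z‖ ^ 2 / (4 * t))

lemma heatKernel_nonneg {t : ℝ} (ht : 0 < t) (z : E) : 0 ≤ heatKernel t z := by
  unfold heatKernel; positivity

lemma heatKernel_neg (t : ℝ) (z : E) : heatKernel t (-z) = heatKernel t z := by
  simp only [heatKernel, norm_neg]

lemma continuous_heatKernel (t : ℝ) : Continuous (heatKernel t : E → ℝ) := by
  unfold heatKernel; fun_prop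

lemma ofReal_heatKernel_mul_cexp_inner (t : ℝ) (w z : E) :
    (heatKernel t z : ℂ) * Complex.exp (⟪w, z⟫_ℝ * Complex.I) =
      ((4 * π * t) ^ (-(Module.finrank ℝ E : ℝ) / 2) : ℝ) *
        Complex.exp (-((4 * t : ℝ) : ℂ)⁻¹ * ‖z‖ ^ 2 + Complex.I * ⟪w, z⟫_ℝ) := by
  rw [heatKernel, Complex.ofReal_mul, Complex.ofReal_exp, mul_assoc, ← Complex.exp_add]
  congr 2
  push_cast
  ring

variable [FiniteDimensional ℝ E] [MeasurableSpace E] [BorelSpace E]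

lemma integrable_heatKernel {t : ℝ} (ht : 0 < t) :
    Integrable (heatKernel t : E → ℝ) := by
  have re_pos : 0 < (((4 * t : ℝ) : ℂ)⁻¹).re := by
    rw [← Complex.ofReal_inv, Complex.ofReal_re]; positivity
  have integrable_re :=
    ((GaussianFourier.integrable_cexp_neg_mul_sq_norm_add re_pos Complex.I (0 : E)).const_mul
      (((4 * π * t) ^ (-(Module.finrank ℝ E : ℝ) / 2) : ℝ) : ℂ)).re
  simp_rw [← ofReal_heatKernel_mul_cexp_inner] at integrable_re
  simpa using integrable_re

lemma integral_heatKernel_mul_cexp_inner {t : ℝ} (ht : 0 < t) (w : E) :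
    ∫ z, (heatKernel t z : ℂ) * Complex.exp (⟪w, z⟫_ℝ * Complex.I) =
      Complex.exp (-(t * ‖w‖ ^ 2)) := by
  have re_pos : 0 < (((4 * t : ℝ) : ℂ)⁻¹).re := by
    rw [← Complex.ofReal_inv, Complex.ofReal_re]; positivity
  have ht' : (t : ℂ) ≠ 0 := mod_cast ht.ne'
  have base : (π : ℂ) / ((4 * t : ℝ) : ℂ)⁻¹ = ((4 * π * t : ℝ) : ℂ) := by
    push_cast; field_simp
  have normalization : (((4 * π * t) ^ (-(Module.finrank ℝ E : ℝ) / 2) : ℝ) : ℂ) *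
      ((4 * π * t : ℝ) : ℂ) ^ ((Module.finrank ℝ E : ℂ) / 2) = 1 := by
    have exponent : (Module.finrank ℝ E : ℂ) / 2 = ((Module.finrank ℝ E / 2 : ℝ) : ℂ) := by
      push_cast; rfl
    rw [exponent, ← Complex.ofReal_cpow (by positivity), ← Complex.ofReal_mul,
      ← rpow_add (by positivity), neg_div, neg_add_cancel, rpow_zero, Complex.ofReal_one]
  simp_rw [ofReal_heatKernel_mul_cexp_inner]
  rw [integral_const_mul, GaussianFourier.integral_cexp_neg_mul_sq_norm_add re_pos, base,
    ← mul_assoc, normalization, one_mul]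
  congr 1
  push_cast
  rw [Complex.I_sq]
  field_simp

open ProbabilityTheory in
lemma withDensity_heatKernel {t : ℝ} (ht : 0 < t) :
    (volume : Measure E).withDensity (fun z => ENNReal.ofReal (heatKernel t z)) =
      (stdGaussian E).map (fun z => √(2 * t) • z) := by
  have := isFiniteMeasure_withDensity_ofReal (integrable_heatKernel (E := E) ht).2
  have : IsProbabilityMeasure ((stdGaussian E).map fun z => √(2 * t) • z) :=
    Measure.isProbabilityMeasure_map (by fun_prop)
  refine Measure.ext_of_charFun (funext fun w => ?_)
  rw [charFun_map_smul, charFun_stdGaussian, charFun_apply,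
    integral_withDensity_eq_integral_toReal_smul (continuous_heatKernel t).measurable.ennreal_ofReal
      (by simp)]
  simp_rw [ENNReal.toReal_ofReal (heatKernel_nonneg ht _), Complex.real_smul, real_inner_comm]
  rw [integral_heatKernel_mul_cexp_inner ht, norm_smul, norm_of_nonneg (sqrt_nonneg _)]
  congr 1
  rw [← Complex.ofReal_pow (√(2 * t) * ‖w‖), mul_pow, sq_sqrt (by positivity)]
  push_cast
  ring

lemma lintegral_heatKernel_mul {t : ℝ} (ht : 0 < t) {G : E → ℝ≥0∞} (hG : Measurable G) :
    ∫⁻ z, ENNReal.ofReal (heatKernel t z) * G z =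
      ∫⁻ z, G (√(2 * t) • z) ∂ProbabilityTheory.stdGaussian E := by
  rw [← lintegral_map hG (by fun_prop), ← withDensity_heatKernel ht,
    lintegral_withDensity_eq_lintegral_mul _
      (continuous_heatKernel t).measurable.ennreal_ofReal hG]
  rfl

end HeatKernel

section GaussianMoment

open ProbabilityTheory

lemma integral_abs_gaussianReal_zero (v : ℝ≥0) :
    ∫ x, |x| ∂gaussianReal 0 v = √(2 * v / π) := by
  rcases eq_or_ne v 0 with rfl | hv
  · simp
  have : 0 < (v : ℝ) := by positivity
  have half_line : ∫ x in Set.Ioi 0, x * exp (-x ^ 2 / (2 * v)) = v := by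
    calc ∫ x in Set.Ioi 0, x * exp (-x ^ 2 / (2 * v))
        = ∫ x in Set.Ioi 0, x ^ (1 : ℝ) * exp (-(2 * (v : ℝ))⁻¹ * x ^ (2 : ℝ)) := by
          simp_rw [rpow_one, rpow_two, neg_mul, neg_div, div_eq_inv_mul]
      _ = v := by
          rw [integral_rpow_mul_exp_neg_mul_rpow two_pos (by norm_num) (by positivity),
            one_add_one_eq_two, neg_div, div_self two_ne_zero, rpow_neg_one, inv_inv, Gamma_one]
          ring
  simp_rw [integral_gaussianReal_eq_integral_smul hv, gaussianPDFReal, sub_zero, smul_eq_mul]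
  calc ∫ x, (√(2 * π * v))⁻¹ * exp (-x ^ 2 / (2 * v)) * |x|
      = (√(2 * π * v))⁻¹ * ∫ x, |x| * exp (-|x| ^ 2 / (2 * v)) := by
        rw [← integral_const_mul]
        simp_rw [sq_abs]
        congr with x
        ring
    _ = (√(2 * π * v))⁻¹ * (2 * v) := by
        rw [integral_comp_abs (f := fun x => x * exp (-x ^ 2 / (2 * v))), half_line]
    _ = √(2 * v / π) := by
        rw [eq_comm, sqrt_eq_iff_mul_self_eq (by positivity) (by positivity)]
        field_simp
        rw [sq_sqrt (by positivity)]

lemma lintegral_enorm_gaussianReal_zero (v : ℝ≥0) :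
    ∫⁻ x, ‖x‖ₑ ∂gaussianReal 0 v = ENNReal.ofReal √(2 * v / π) := by
  rw [← integral_abs_gaussianReal_zero]
  exact (ofReal_integral_norm_eq_lintegral_enorm
    ((memLp_id_gaussianReal 1).integrable le_rfl)).symm

variable {E : Type*} [NormedAddCommGroup E] [InnerProductSpace ℝ E] [FiniteDimensional ℝ E]
  [MeasurableSpace E] [BorelSpace E]

lemma lintegral_enorm_clm_stdGaussian (L : E →L[ℝ] ℝ) :
    ∫⁻ z, ‖L z‖ₑ ∂stdGaussian E = ENNReal.ofReal √(2 / π) * ‖L‖ₑ := by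
  have law : (stdGaussian E).map L = gaussianReal 0 (‖L‖ ^ 2).toNNReal := by
    rw [IsGaussian.map_eq_gaussianReal, integral_strongDual_stdGaussian, variance_dual_stdGaussian]
  rw [← lintegral_map (g := L) (f := fun x => ‖x‖ₑ) (by fun_prop) (by fun_prop), law,
    lintegral_enorm_gaussianReal_zero, coe_toNNReal _ (sq_nonneg _), ← ofReal_norm,
    ← ENNReal.ofReal_mul (sqrt_nonneg _), mul_div_right_comm, sqrt_mul (by positivity),
    sqrt_sq (norm_nonneg _)]

end GaussianMoment

section Translation

variable {E F : Type*} [NormedAddCommGroup E] [MeasurableSpace E] [NormedAddCommGroup F]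

/-- The `L¹(μ)` distance between `f` and its translate by `h`. -/
noncomputable def translationModulus (μ : Measure E) (f : E → F) (h : E) : ℝ≥0∞ :=
  ∫⁻ x, ‖f (x + h) - f x‖ₑ ∂μ

variable [BorelSpace E] {μ : Measure E} {g : E → F}

lemma measurable_translationModulus [SecondCountableTopology E] [SFinite μ] (hg : Continuous g) :
    Measurable (translationModulus μ g) :=
  Measurable.lintegral_prod_right' (f := fun p : E × E => ‖g (p.2 + p.1) - g p.2‖ₑ)
    (by fun_prop : Continuous _).measurable

variable [NormedSpace ℝ E] [NormedSpace ℝ F]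

lemma lintegral_enorm_fderiv_apply_le_liminf {ι : Type*} {l : Filter ι} [l.NeBot]
    [l.IsCountablyGenerated] {s : ι → ℝ} (hs : Tendsto s l (𝓝[≠] 0)) (hg : Differentiable ℝ g)
    (z : E) :
    ∫⁻ x, ‖fderiv ℝ g x z‖ₑ ∂μ ≤
      liminf (fun i => ‖(s i)⁻¹‖ₑ * translationModulus μ g (s i • z)) l := by
  have difference_quotient (x : E) :
      Tendsto (fun i => ‖(s i)⁻¹ • (g (x + s i • z) - g x)‖ₑ) l (𝓝 ‖fderiv ℝ g x z‖ₑ) :=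
    (((hg x).hasFDerivAt.hasLineDerivAt z).tendsto_slope_zero.comp hs).enorm
  calc ∫⁻ x, ‖fderiv ℝ g x z‖ₑ ∂μ
      = ∫⁻ x, liminf (fun i => ‖(s i)⁻¹ • (g (x + s i • z) - g x)‖ₑ) l ∂μ := by
        simp_rw [(difference_quotient _).liminf_eq]
    _ ≤ liminf (fun i => ∫⁻ x, ‖(s i)⁻¹ • (g (x + s i • z) - g x)‖ₑ ∂μ) l := by
        have := hg.continuous
        exact lintegral_liminf_le fun i => (by fun_prop : Continuous _).measurable
    _ = liminf (fun i => ‖(s i)⁻¹‖ₑ * translationModulus μ g (s i • z)) l := by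
        simp_rw [enorm_smul, lintegral_const_mul' _ _ enorm_ne_top, translationModulus]

end Translation

section HeatOscillation

variable {E : Type*} [NormedAddCommGroup E] [InnerProductSpace ℝ E] [FiniteDimensional ℝ E]
  [MeasurableSpace E] [BorelSpace E]

/-- The mean oscillation `∫∫ p_t(x, y) |f y - f x| dy dx` of `f` at the scale of the heat kernel. -/
noncomputable def heatOscillation (t : ℝ) (f : E → ℝ) : ℝ≥0∞ :=
  ∫⁻ x, ∫⁻ y, ENNReal.ofReal (heatKernel t (x - y) * |f y - f x|)

lemma heatOscillation_eq_lintegral_translationModulus {t : ℝ} (ht : 0 < t) {f : E → ℝ}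
    (hf : AEStronglyMeasurable f) :
    heatOscillation t f =
      ∫⁻ z, ENNReal.ofReal (heatKernel t z) * translationModulus volume f z := by
  have measurable_integrand : AEMeasurable
      (fun p : E × E => ENNReal.ofReal (heatKernel t p.2) * ‖f (p.1 + p.2) - f p.1‖ₑ)
      (volume.prod volume) := by
    have translate : AEStronglyMeasurable (fun p : E × E => f (p.1 + p.2)) (volume.prod volume) :=
      hf.comp_quasiMeasurePreserving (quasiMeasurePreserving_add _ _)
    exact ((continuous_heatKernel t).measurable.ennreal_ofReal.comp measurable_snd).aemeasurable.mul
      (translate.sub hf.comp_fst).enorm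
  calc heatOscillation t f
      = ∫⁻ x, ∫⁻ z, ENNReal.ofReal (heatKernel t z) * ‖f (x + z) - f x‖ₑ := by
        refine lintegral_congr fun x => ?_
        rw [← lintegral_add_left_eq_self _ x]
        refine lintegral_congr fun z => ?_
        rw [sub_add_cancel_left, heatKernel_neg, ENNReal.ofReal_mul (heatKernel_nonneg ht z),
          enorm_eq_ofReal_abs]
    _ = ∫⁻ z, ∫⁻ x, ENNReal.ofReal (heatKernel t z) * ‖f (x + z) - f x‖ₑ :=
        lintegral_lintegral_swap measurable_integrand
    _ = ∫⁻ z, ENNReal.ofReal (heatKernel t z) * translationModulus volume f z := by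
        simp_rw [lintegral_const_mul' _ _ ENNReal.ofReal_ne_top, translationModulus]

lemma heatOscillation_eq_lintegral_stdGaussian {t : ℝ} (ht : 0 < t) {g : E → ℝ}
    (hg : Continuous g) :
    heatOscillation t g =
      ∫⁻ z, translationModulus volume g (√(2 * t) • z) ∂ProbabilityTheory.stdGaussian E := by
  rw [heatOscillation_eq_lintegral_translationModulus ht hg.aestronglyMeasurable,
    lintegral_heatKernel_mul ht (measurable_translationModulus hg)]

open ProbabilityTheory in
lemma lintegral_enorm_fderiv_le_liminf_lintegral_stdGaussian {ι : Type*} {l : Filter ι} [l.NeBot]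
    [l.IsCountablyGenerated] {s : ι → ℝ} (hs : Tendsto s l (𝓝[≠] 0)) {g : E → ℝ}
    (hg : ContDiff ℝ 1 g) :
    ENNReal.ofReal √(2 / π) * ∫⁻ x, ‖fderiv ℝ g x‖ₑ ≤
      liminf (fun i => ‖(s i)⁻¹‖ₑ *
        ∫⁻ z, translationModulus volume g (s i • z) ∂stdGaussian E) l := by
  have measurable_derivative : Measurable fun p : E × E => ‖fderiv ℝ g p.1 p.2‖ₑ :=
    (((hg.continuous_fderiv one_ne_zero).comp continuous_fst).clm_apply
      continuous_snd).enorm.measurable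
  calc ENNReal.ofReal √(2 / π) * ∫⁻ x, ‖fderiv ℝ g x‖ₑ
      = ∫⁻ x, ∫⁻ z, ‖fderiv ℝ g x z‖ₑ ∂stdGaussian E := by
        simp_rw [lintegral_enorm_clm_stdGaussian, lintegral_const_mul' _ _ ENNReal.ofReal_ne_top]
    _ = ∫⁻ z, (∫⁻ x, ‖fderiv ℝ g x z‖ₑ) ∂stdGaussian E :=
        lintegral_lintegral_swap measurable_derivative.aemeasurable
    _ ≤ ∫⁻ z, liminf (fun i => ‖(s i)⁻¹‖ₑ * translationModulus volume g (s i • z)) l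
          ∂stdGaussian E :=
        lintegral_mono fun z =>
          lintegral_enorm_fderiv_apply_le_liminf hs (hg.differentiable one_ne_zero) z
    _ ≤ liminf (fun i => ∫⁻ z, ‖(s i)⁻¹‖ₑ * translationModulus volume g (s i • z)
          ∂stdGaussian E) l :=
        lintegral_liminf_le fun i => ((measurable_translationModulus hg.continuous).comp
          (measurable_const_smul (s i))).const_mul _
    _ = _ := by simp_rw [lintegral_const_mul' _ _ enorm_ne_top]

lemma tendsto_sqrt_two_mul_nhdsNE_zero :
    Tendsto (fun t : ℝ => √(2 * t)) (𝓝[>] 0) (𝓝[≠] 0) := by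
  refine tendsto_nhdsWithin_iff.2 ⟨?_, ?_⟩
  · have : Tendsto (fun t : ℝ => √(2 * t)) (𝓝 0) (𝓝 √(2 * 0)) :=
      (by fun_prop : Continuous _).tendsto 0
    simpa using this.mono_left nhdsWithin_le_nhds
  · filter_upwards [self_mem_nhdsWithin] with t ht
    have : 0 < t := ht
    exact (sqrt_pos.2 (by positivity)).ne'

lemma lintegral_enorm_fderiv_le_liminf_heatOscillation {g : E → ℝ} (hg : ContDiff ℝ 1 g) :
    ∫⁻ x, ‖fderiv ℝ g x‖ₑ ≤ ENNReal.ofReal (√π / 2) *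
      liminf (fun t : ℝ => ENNReal.ofReal (t ^ (-(1 / 2 : ℝ))) * heatOscillation t g)
        (𝓝[>] 0) := by
  have rescale : ∀ᶠ t : ℝ in 𝓝[>] 0,
      ‖(√(2 * t))⁻¹‖ₑ * ∫⁻ z, translationModulus volume g (√(2 * t) • z)
          ∂ProbabilityTheory.stdGaussian E =
        ENNReal.ofReal (√2)⁻¹ * (ENNReal.ofReal (t ^ (-(1 / 2 : ℝ))) * heatOscillation t g) := by
    filter_upwards [self_mem_nhdsWithin] with t ht
    rw [← heatOscillation_eq_lintegral_stdGaussian ht hg.continuous, ← mul_assoc,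
      ← ENNReal.ofReal_mul (by positivity), enorm_of_nonneg (by positivity), sqrt_mul zero_le_two,
      mul_inv, rpow_neg (le_of_lt ht), ← sqrt_eq_rpow]
  have gaussian_constant :
      ENNReal.ofReal (√π / 2) * ENNReal.ofReal √2 * ENNReal.ofReal √(2 / π) = 1 := by
    rw [← ENNReal.ofReal_mul (by positivity), ← ENNReal.ofReal_mul (by positivity),
      sqrt_div zero_le_two]
    field_simp
    rw [sq_sqrt zero_le_two, div_self two_ne_zero, ENNReal.ofReal_one]
  calc ∫⁻ x, ‖fderiv ℝ g x‖ₑ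
      = ENNReal.ofReal (√π / 2) * ENNReal.ofReal √2 *
          (ENNReal.ofReal √(2 / π) * ∫⁻ x, ‖fderiv ℝ g x‖ₑ) := by
        rw [← mul_assoc, gaussian_constant, one_mul]
    _ ≤ ENNReal.ofReal (√π / 2) * ENNReal.ofReal √2 *
          liminf (fun t : ℝ => ENNReal.ofReal (√2)⁻¹ *
            (ENNReal.ofReal (t ^ (-(1 / 2 : ℝ))) * heatOscillation t g)) (𝓝[>] 0) := by
        rw [← liminf_congr rescale]
        gcongr
        exact lintegral_enorm_fderiv_le_liminf_lintegral_stdGaussian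
          tendsto_sqrt_two_mul_nhdsNE_zero hg
    _ = _ := by
        rw [ENNReal.liminf_const_mul_of_ne_top ENNReal.ofReal_ne_top, mul_assoc,
          ← mul_assoc (ENNReal.ofReal √2), ← ENNReal.ofReal_mul (sqrt_nonneg 2),
          mul_inv_cancel₀ (by positivity), ENNReal.ofReal_one, one_mul]

end HeatOscillation

section Mollification

variable {E F : Type*} [NormedAddCommGroup E] [NormedSpace ℝ E] [FiniteDimensional ℝ E]
  [MeasurableSpace E] [BorelSpace E] [NormedAddCommGroup F] [NormedSpace ℝ F]
  {μ : Measure E} [μ.IsAddHaarMeasure]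

lemma translationModulus_convolution_le {φ : E → ℝ} (hφ : Continuous φ)
    (hsupp : HasCompactSupport φ) {f : E → F} (hf : LocallyIntegrable f μ) (h : E) :
    translationModulus μ (φ ⋆[lsmul ℝ ℝ, μ] f) h ≤
      (∫⁻ y, ‖φ y‖ₑ ∂μ) * translationModulus μ f h := by
  have convolution_exists := hsupp.convolutionExists_left (lsmul ℝ ℝ) hφ hf
  have convolution_sub (x : E) : (φ ⋆[lsmul ℝ ℝ, μ] f) (x + h) - (φ ⋆[lsmul ℝ ℝ, μ] f) x =
      ∫ y, φ y • (f (x - y + h) - f (x - y)) ∂μ := by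
    refine (integral_sub (convolution_exists (x + h)).integrable
      (convolution_exists x).integrable).symm.trans ?_
    simp only [ContinuousLinearMap.lsmul_apply, smul_sub, add_sub_right_comm]
  have measurable_increment : AEStronglyMeasurable (fun x => f (x + h) - f x) μ :=
    (hf.aestronglyMeasurable.comp_measurePreserving (measurePreserving_add_right μ h)).sub
      hf.aestronglyMeasurable
  have measurable_integrand : AEMeasurable
      (fun p : E × E => ‖φ p.2‖ₑ * ‖f (p.1 - p.2 + h) - f (p.1 - p.2)‖ₑ) (μ.prod μ) :=
    (hφ.comp continuous_snd).enorm.measurable.aemeasurable.mul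
      (measurable_increment.comp_quasiMeasurePreserving
        (quasiMeasurePreserving_sub_of_right_invariant μ μ)).enorm
  calc translationModulus μ (φ ⋆[lsmul ℝ ℝ, μ] f) h
      ≤ ∫⁻ x, ∫⁻ y, ‖φ y‖ₑ * ‖f (x - y + h) - f (x - y)‖ₑ ∂μ ∂μ := by
        refine lintegral_mono fun x => ?_
        simp_rw [convolution_sub, ← enorm_smul]
        exact enorm_integral_le_lintegral_enorm _
    _ = ∫⁻ y, ∫⁻ x, ‖φ y‖ₑ * ‖f (x - y + h) - f (x - y)‖ₑ ∂μ ∂μ :=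
        lintegral_lintegral_swap measurable_integrand
    _ = ∫⁻ y, ‖φ y‖ₑ * translationModulus μ f h ∂μ := by
        refine lintegral_congr fun y => ?_
        rw [lintegral_const_mul' _ _ enorm_ne_top,
          lintegral_sub_right_eq_self (fun x => ‖f (x + h) - f x‖ₑ) y, translationModulus]
    _ = (∫⁻ y, ‖φ y‖ₑ ∂μ) * translationModulus μ f h :=
        lintegral_mul_const _ hφ.enorm.measurable

lemma lintegral_enorm_normed (φ : ContDiffBump (0 : E)) : ∫⁻ y, ‖φ.normed μ y‖ₑ ∂μ = 1 := by
  rw [← ofReal_integral_norm_eq_lintegral_enorm φ.integrable_normed]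
  simp_rw [norm_of_nonneg (φ.nonneg_normed (μ := μ) _), φ.integral_normed, ENNReal.ofReal_one]

lemma translationModulus_normed_convolution_le (φ : ContDiffBump (0 : E)) {f : E → F}
    (hf : LocallyIntegrable f μ) (h : E) :
    translationModulus μ (φ.normed μ ⋆[lsmul ℝ ℝ, μ] f) h ≤ translationModulus μ f h :=
  (translationModulus_convolution_le φ.continuous_normed φ.hasCompactSupport_normed hf h).trans_eq
    (by rw [lintegral_enorm_normed, one_mul])

/-- Pairing with `ψ` is written as a convolution evaluated at `0`, so that Fubini's theorem becomes
associativity of convolution. -/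
lemma integral_convolution_mul_eq_convolution_apply_zero {φ f ψ : E → ℝ} (hφ : Continuous φ)
    (hφ_supp : HasCompactSupport φ) (hf : LocallyIntegrable f μ) (hψ : Continuous ψ)
    (hψ_supp : HasCompactSupport ψ) :
    ∫ x, (φ ⋆[lsmul ℝ ℝ, μ] f) x * ψ x ∂μ =
      (φ ⋆[lsmul ℝ ℝ, μ] (f ⋆[mul ℝ ℝ, μ] fun x => ψ (-x))) 0 := by
  have reflection_continuous : Continuous fun x => ψ (-x) := hψ.comp continuous_neg
  have reflection_supp : HasCompactSupport fun x => ψ (-x) :=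
    hψ_supp.comp_homeomorph (Homeomorph.neg E)
  have norm_f_locallyIntegrable : LocallyIntegrable (fun x => ‖f x‖) μ := fun x => (hf x).norm
  have norm_convolution_continuous :
      Continuous ((fun x => ‖f x‖) ⋆[mul ℝ ℝ, μ] fun x => ‖ψ (-x)‖) :=
    reflection_supp.norm.continuous_convolution_right _ norm_f_locallyIntegrable
      reflection_continuous.norm
  rw [← convolution_assoc (lsmul ℝ ℝ) (mul ℝ ℝ) (lsmul ℝ ℝ) (mul ℝ ℝ)
    (fun a b c => mul_assoc a b c) hφ.aestronglyMeasurable hf.aestronglyMeasurable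
    reflection_continuous.aestronglyMeasurable
    (.of_forall <| hφ_supp.convolutionExists_left _ hφ hf)
    (.of_forall <| reflection_supp.norm.convolutionExists_right _ norm_f_locallyIntegrable
      reflection_continuous.norm)
    (hφ_supp.norm.convolutionExists_left _ hφ.norm norm_convolution_continuous.locallyIntegrable 0)]
  simp [convolution_def]

lemma tendsto_integral_normed_convolution_mul {ι : Type*} {l : Filter ι}
    {φ : ι → ContDiffBump (0 : E)} (hφ : Tendsto (fun i => (φ i).rOut) l (𝓝 0)) {f ψ : E → ℝ}
    (hf : LocallyIntegrable f μ) (hψ : Continuous ψ) (hψ_supp : HasCompactSupport ψ) :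
    Tendsto (fun i => ∫ x, ((φ i).normed μ ⋆[lsmul ℝ ℝ, μ] f) x * ψ x ∂μ) l
      (𝓝 (∫ x, f x * ψ x ∂μ)) := by
  have correlation_continuous : Continuous (f ⋆[mul ℝ ℝ, μ] fun x => ψ (-x)) :=
    (hψ_supp.comp_homeomorph (Homeomorph.neg E)).continuous_convolution_right _ hf
      (hψ.comp continuous_neg)
  have limit := ContDiffBump.convolution_tendsto_right_of_continuous (μ := μ) hφ
    correlation_continuous 0
  simp only [convolution_def (f := f), zero_sub, neg_neg, ContinuousLinearMap.mul_apply'] at limit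
  exact limit.congr fun i =>
    (integral_convolution_mul_eq_convolution_apply_zero (φ i).continuous_normed
      (φ i).hasCompactSupport_normed hf hψ hψ_supp).symm

lemma exists_seq_contDiffBump_tendsto_rOut {X : Type*} (c : X) :
    ∃ φ : ℕ → ContDiffBump c, Tendsto (fun k => (φ k).rOut) atTop (𝓝 0) :=
  ⟨fun k => ⟨1 / (k + 1) / 2, 1 / (k + 1), by positivity, half_lt_self (by positivity)⟩,
    tendsto_one_div_add_atTop_nhds_zero_nat⟩

end Mollification

section LowerSemicontinuity

variable {E : Type*} [NormedAddCommGroup E] [InnerProductSpace ℝ E] [FiniteDimensional ℝ E]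
  [MeasurableSpace E] [BorelSpace E] {f : E → ℝ}

lemma totalVariation_le_liminf_normed_convolution {ι : Type*} {l : Filter ι} [l.NeBot]
    {φ : ι → ContDiffBump (0 : E)} (hφ : Tendsto (fun i => (φ i).rOut) l (𝓝 0))
    (hf : LocallyIntegrable f) :
    totalVariation f ≤ liminf (fun i => totalVariation ((φ i).normed volume ⋆[lsmul ℝ ℝ] f)) l := by
  refine iSup_le fun ζ => ?_
  have pairing_tendsto := (ENNReal.continuous_ofReal.tendsto _).comp <|
    tendsto_integral_normed_convolution_mul hφ hf (continuous_divergence ζ.2.1)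
      (hasCompactSupport_divergence ζ.2.2.1)
  rw [← pairing_tendsto.liminf_eq]
  exact liminf_le_liminf <| .of_forall fun i => le_iSup (fun ξ : {ζ : E → E //
    ContDiff ℝ 1 ζ ∧ HasCompactSupport ζ ∧ ∀ x, ‖ζ x‖ ≤ 1} =>
      ENNReal.ofReal (∫ x, ((φ i).normed volume ⋆[lsmul ℝ ℝ] f) x * divergence ξ.1 x)) ζ

lemma heatOscillation_normed_convolution_le (φ : ContDiffBump (0 : E))
    (hf : LocallyIntegrable f) {t : ℝ} (ht : 0 < t) :
    heatOscillation t (φ.normed volume ⋆[lsmul ℝ ℝ] f) ≤ heatOscillation t f := by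
  have mollification_continuous : Continuous (φ.normed volume ⋆[lsmul ℝ ℝ] f) :=
    φ.hasCompactSupport_normed.continuous_convolution_left _ φ.continuous_normed hf
  rw [heatOscillation_eq_lintegral_translationModulus ht hf.aestronglyMeasurable,
    heatOscillation_eq_lintegral_translationModulus ht
      mollification_continuous.aestronglyMeasurable]
  gcongr with z
  exact translationModulus_normed_convolution_le φ hf z

theorem total_variation_heat_liminf_bound_general (hf : LocallyIntegrable f) :
    totalVariation f ≤ ENNReal.ofReal (√π / 2) *
      liminf (fun t : ℝ => ENNReal.ofReal (t ^ (-(1 / 2 : ℝ))) * heatOscillation t f)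
        (𝓝[>] 0) := by
  obtain ⟨φ, hφ⟩ := exists_seq_contDiffBump_tendsto_rOut (0 : E)
  refine (totalVariation_le_liminf_normed_convolution hφ hf).trans <|
    liminf_le_of_frequently_le' (.of_forall fun k => ?_)
  set g := (φ k).normed volume ⋆[lsmul ℝ ℝ] f
  have g_contDiff : ContDiff ℝ 1 g :=
    (φ k).hasCompactSupport_normed.contDiff_convolution_left _ (φ k).contDiff_normed hf
  calc totalVariation g
      ≤ ∫⁻ x, ‖fderiv ℝ g x‖ₑ := totalVariation_le_lintegral_enorm_fderiv g_contDiff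
    _ ≤ ENNReal.ofReal (√π / 2) *
          liminf (fun t : ℝ => ENNReal.ofReal (t ^ (-(1 / 2 : ℝ))) * heatOscillation t g)
            (𝓝[>] 0) := lintegral_enorm_fderiv_le_liminf_heatOscillation g_contDiff
    _ ≤ _ := by
        gcongr ENNReal.ofReal (√π / 2) * ?_
        refine liminf_le_liminf ?_
        filter_upwards [self_mem_nhdsWithin] with t ht
        gcongr
        exact heatOscillation_normed_convolution_le (φ k) hf ht

end LowerSemicontinuity

theorem total_variation_heat_liminf_bound (n : ℕ) (hn : 1 ≤ n)
    (f : EuclideanSpace ℝ (Fin n) → ℝ) (hf : MemLp f 1 volume) :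
    (⨆ ζ : {ζ : EuclideanSpace ℝ (Fin n) → EuclideanSpace ℝ (Fin n) //
        ContDiff ℝ 1 ζ ∧ HasCompactSupport ζ ∧ ∀ x, ‖ζ x‖ ≤ 1},
      ENNReal.ofReal (∫ x, f x *
        ∑ i : Fin n, fderiv ℝ (fun y => ζ.1 y i) x (EuclideanSpace.single i 1)))
      ≤ ENNReal.ofReal (Real.sqrt π / 2) *
        Filter.liminf (fun t : ℝ =>
          ENNReal.ofReal (t ^ (-(1 / 2 : ℝ))) *
            ∫⁻ x, ∫⁻ y, ENNReal.ofReal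
              ((4 * π * t) ^ (-(n : ℝ) / 2) * Real.exp (-‖x - y‖ ^ 2 / (4 * t)) *
                |f y - f x|)) (𝓝[>] (0 : ℝ)) := by
  have bound := total_variation_heat_liminf_bound_general (hf.locallyIntegrable le_rfl)
  simp only [heatOscillation, heatKernel, finrank_euclideanSpace_fin] at bound
  refine le_of_eq_of_le (iSup_congr fun ζ => ?_) bound
  simp_rw [divergence_euclideanSpace (ζ.2.1.differentiable one_ne_zero _)]
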